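/- Crude soundness of the product tester (Raz–Safra style): Let C be an [n,k,d] code and m ≥ 3. Suppose r ∈ Σ^{[n]^m} has τ-soundness-error ε, i.e., Pr_{b,i}[δ_{C^{m-1}}(r_{b,i}) > τ] ≤ ε, where τ + 2ε ≤ (1/12)·((d−1)/n)^m. Then δ_{C^m}(r) ≤ 16·(n/d)^{m-1}·(τ + ε). -/

import Mathlib

/-- Relative Hamming distance between two words indexed by a finite type. -/
noncomputable def relHammingDist {ι F : Type} [Fintype ι] [DecidableEq F] (x y : ι → F) : ℝ :=
  (hammingDist x y : ℝ) / (Fintype.card ι)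

/-- Relative Hamming distance from a word to (the nearest codeword of) a code. -/
noncomputable def distToCode {ι F : Type} [Fintype ι] [DecidableEq F] (C : Set (ι → F)) (r : ι → F) : ℝ :=
  sInf (relHammingDist r '' C)

/-- Minimum Hamming distance of a code. -/
noncomputable def minDist {ι F : Type} [Fintype ι] [DecidableEq F] (C : Set (ι → F)) : ℕ :=
  sInf {e | ∃ x ∈ C, ∃ y ∈ C, x ≠ y ∧ hammingDist x y = e}

/-- The `m`-fold tensor power `C^m` of a code `C ⊆ F^n`. -/
def tensorPow {F : Type} {n : ℕ} (C : Set (Fin n → F)) (m : ℕ) :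
    Set ((Fin m → Fin n) → F) :=
  {r | ∀ (b : Fin m) (x : Fin m → Fin n), (fun i => r (Function.update x b i)) ∈ C}

/-- The slice `r_{b,i}`: fix the `b`-th coordinate of the array to `i`. -/
def sliceAt {F : Type} {n m : ℕ} (r : (Fin (m + 1) → Fin n) → F) (b : Fin (m + 1)) (i : Fin n) :
    (Fin m → Fin n) → F :=
  fun x => r (b.insertNth i x)

namespace CrudeAux

lemma line_weight {F : Type} [Field F] [DecidableEq F] {n : ℕ}
    (C : Submodule F (Fin n → F)) (w : Fin n → F) (hw : w ∈ C) (h0 : w ≠ 0) :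
    minDist (C : Set (Fin n → F)) ≤ (Finset.univ.filter (fun i => w i ≠ 0)).card := by
  have : (Finset.univ.filter (fun i => w i ≠ 0)).card = hammingDist w 0 := by
    simp [hammingDist]
  rw [this]
  exact Nat.sInf_le ⟨w, hw, 0, C.zero_mem, h0, rfl⟩

lemma eq_zero_of_agree {F : Type} [Field F] [DecidableEq F] {n : ℕ}
    (C : Submodule F (Fin n → F)) (S : Finset (Fin n))
    (hS : Sᶜ.card < minDist (C : Set (Fin n → F)))
    (w : Fin n → F) (hw : w ∈ C) (h : ∀ i ∈ S, w i = 0) : w = 0 := by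
  by_contra h0
  have h1 := line_weight C w hw h0
  have h2 : (Finset.univ.filter (fun i => w i ≠ 0)).card ≤ Sᶜ.card := by
    apply Finset.card_le_card
    intro i hi
    simp only [Finset.mem_filter, Finset.mem_univ, true_and] at hi
    simp only [Finset.mem_compl]
    exact fun hh => hi (h i hh)
  omega

/-- Sub-array weight bound. -/
lemma weight_bound {F : Type} [Field F] [DecidableEq F] {n N : ℕ}
    (C : Submodule F (Fin n → F)) (f : (Fin N → Fin n) → F) (T : Finset (Fin N)) :
    (∀ e ∈ T, ∀ x, (fun j => f (Function.update x e j)) ∈ C) → ∀ x, f x ≠ 0 →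
    (minDist (C : Set (Fin n → F))) ^ T.card ≤
      (Finset.univ.filter (fun y => (∀ e, e ∉ T → y e = x e) ∧ f y ≠ 0)).card := by
  induction T using Finset.induction_on with
  | empty =>
    intro _ x hx
    simp only [Finset.card_empty, pow_zero]
    apply Finset.card_pos.mpr
    exact ⟨x, by simp [hx]⟩
  | insert e T he ih =>
    intro hT x hx
    have hline := hT e (Finset.mem_insert_self _ _) x
    have hw := line_weight C _ hline (by
      intro h
      have := congrFun h (x e)
      simp at this
      exact hx this)
    set J := Finset.univ.filter (fun i => f (Function.update x e i) ≠ 0) with hJ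
    rw [Finset.card_insert_of_notMem he, pow_succ, mul_comm]
    have hsub : (J.biUnion (fun j => Finset.univ.filter
        (fun y => (∀ e', e' ∉ T → y e' = (Function.update x e j) e') ∧ f y ≠ 0))) ⊆
        (Finset.univ.filter (fun y => (∀ e', e' ∉ insert e T → y e' = x e') ∧ f y ≠ 0)) := by
      intro y hy
      simp only [Finset.mem_biUnion, Finset.mem_filter, Finset.mem_univ, true_and] at hy ⊢
      obtain ⟨j, _, h1, h2⟩ := hy
      refine ⟨fun e' he' => ?_, h2⟩
      rw [Finset.mem_insert, not_or] at he'
      rw [h1 e' he'.2, Function.update_of_ne he'.1]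
    refine le_trans ?_ (Finset.card_le_card hsub)
    rw [Finset.card_biUnion]
    · calc _ ≤ J.card * (minDist (C : Set (Fin n → F))) ^ T.card := Nat.mul_le_mul_right _ hw
        _ = ∑ j ∈ J, (minDist (C : Set (Fin n → F))) ^ T.card := by simp
        _ ≤ _ := by
          apply Finset.sum_le_sum
          intro j hj
          apply ih (fun e' he' => hT e' (Finset.mem_insert_of_mem he'))
          simpa [hJ] using hj
    · intro j _ j' _ hjj
      rw [Function.onFun, Finset.disjoint_left]
      intro y hy hy'
      simp only [Finset.mem_filter, Finset.mem_univ, true_and] at hy hy'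
      have h1 := hy.1 e he
      have h2 := hy'.1 e he
      simp at h1 h2
      exact hjj (h1.symm.trans h2)

/-- Linear extension from a large subset of coordinates. -/
lemma exists_ext {F : Type} [Field F] [DecidableEq F] {n : ℕ}
    (C : Submodule F (Fin n → F)) (S : Finset (Fin n))
    (hS : Sᶜ.card < minDist (C : Set (Fin n → F))) :
    ∃ L : (Fin n → F) →ₗ[F] (Fin n → F), (∀ f, L f ∈ C) ∧
      ∀ f w, w ∈ C → (∀ i ∈ S, f i = w i) → L f = w := by
  let res : (Fin n → F) →ₗ[F] (S → F) := LinearMap.funLeft F F (Subtype.val)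
  have hinj : LinearMap.ker (res ∘ₗ C.subtype) = ⊥ := by
    rw [LinearMap.ker_eq_bot']
    intro w hw
    apply Subtype.ext
    apply eq_zero_of_agree C S hS _ w.2
    intro i hi
    exact congrFun hw ⟨i, hi⟩
  obtain ⟨g, hg⟩ := LinearMap.exists_leftInverse_of_injective _ hinj
  refine ⟨C.subtype ∘ₗ g ∘ₗ res, fun f => (g (res f)).2, fun f w hw h => ?_⟩
  have h1 : res f = (res ∘ₗ C.subtype) ⟨w, hw⟩ := by
    funext i
    exact h i.1 i.2
  have h2 := LinearMap.congr_fun hg ⟨w, hw⟩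
  simp only [LinearMap.comp_apply] at h2 h1 ⊢
  rw [h1, h2]
  rfl

/-- Gluing. -/
lemma glue {F : Type} [Field F] [DecidableEq F] {n N : ℕ}
    (C : Submodule F (Fin n → F)) (P P' : (Fin N → Fin n) → F) (a b : Fin N) (hab : a ≠ b)
    (hP : ∀ e x, e ≠ a → (fun j => P (Function.update x e j)) ∈ C)
    (hP' : ∀ e x, e ≠ b → (fun j => P' (Function.update x e j)) ∈ C)
    (Sa Sb : Finset (Fin n))
    (hSa : Saᶜ.card < minDist (C : Set (Fin n → F)))
    (hSb : Sbᶜ.card < minDist (C : Set (Fin n → F)))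
    (hcons : ∀ x, x a ∈ Sa → x b ∈ Sb → P x = P' x) :
    ∃ R ∈ tensorPow (C : Set (Fin n → F)) N, ∀ x, x a ∈ Sa → R x = P x := by
  obtain ⟨L, hL1, hL2⟩ := exists_ext C Sa hSa
  let R : (Fin N → Fin n) → F := fun x => L (fun i => P (Function.update x a i)) (x a)
  have hR : R ∈ tensorPow (C : Set (Fin n → F)) N := by
    intro e x
    by_cases hea : e = a
    · subst hea
      simp only [R, Function.update_idem, Function.update_self]
      exact hL1 _
    · have hexp : ∀ (f : Fin n → F) (t : Fin n),
          L f t = ∑ i, f i * L (Pi.single i 1) t := by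
        intro f t
        conv_lhs => rw [LinearMap.pi_apply_eq_sum_univ L f]
        simp only [Finset.sum_apply, Pi.smul_apply, smul_eq_mul]
        apply Finset.sum_congr rfl
        intro i _
        have hs : (fun j => if i = j then (1 : F) else 0) = Pi.single i 1 := by
          funext j
          simp [Pi.single_apply, eq_comm]
        rw [hs]
      have : (fun j => R (Function.update x e j)) =
          ∑ i, (L (Pi.single i 1) (x a)) •
            (fun j => P (Function.update (Function.update x a i) e j)) := by
        funext j
        simp only [R, Finset.sum_apply, Pi.smul_apply, smul_eq_mul]
        rw [Function.update_of_ne (Ne.symm hea), hexp]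
        apply Finset.sum_congr rfl
        intro i _
        rw [Function.update_comm hea, mul_comm]
      rw [this]
      exact C.sum_mem (fun i _ => C.smul_mem _ (hP e _ hea))
  refine ⟨R, hR, ?_⟩
  have h1 : ∀ x, x a ∈ Sa → x b ∈ Sb → R x = P x := by
    intro x hxa hxb
    have := hL2 (fun i => P (Function.update x a i)) (fun i => P' (Function.update x a i))
      (hP' a x hab) (by
        intro i hi
        apply hcons
        · simpa using hi
        · rw [Function.update_of_ne (Ne.symm hab)]; exact hxb)
    simp only [R]
    rw [this]
    simp [hcons x hxa hxb]
  intro x hxa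
  have h2 := eq_zero_of_agree C Sb hSb
    ((fun j => R (Function.update x b j)) - (fun j => P (Function.update x b j)))
    (C.sub_mem (hR b x) (hP b x (Ne.symm hab))) (by
      intro i hi
      simp only [Pi.sub_apply]
      rw [sub_eq_zero]
      apply h1
      · rw [Function.update_of_ne hab]; exact hxa
      · simpa using hi)
  have h3 := congrFun h2 (x b)
  simpa [sub_eq_zero] using h3

/-- The conflict set of two families of slices. -/
def conf {F : Type} [DecidableEq F] {n N : ℕ} (P P' : (Fin N → Fin n) → F) (a b : Fin N)
    (i j : Fin n) : Finset (Fin N → Fin n) :=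
  Finset.univ.filter (fun x => x a = i ∧ x b = j ∧ P x ≠ P' x)

lemma conf_card {F : Type} [Field F] [DecidableEq F] {n m : ℕ}
    (C : Submodule F (Fin n → F)) (P P' : (Fin (m + 1) → Fin n) → F) (a b : Fin (m + 1))
    (hab : a ≠ b)
    (hP : ∀ e x, e ≠ a → (fun j => P (Function.update x e j)) ∈ C)
    (hP' : ∀ e x, e ≠ b → (fun j => P' (Function.update x e j)) ∈ C)
    (i j : Fin n) (h : (conf P P' a b i j).Nonempty) :
    (minDist (C : Set (Fin n → F))) ^ (m - 1) ≤ (conf P P' a b i j).card := by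
  obtain ⟨x, hx⟩ := h
  simp only [conf, Finset.mem_filter, Finset.mem_univ, true_and] at hx
  have hw := weight_bound C (P - P') ({a, b}ᶜ : Finset (Fin (m + 1))) (by
    intro e he y
    simp only [Finset.mem_compl, Finset.mem_insert, Finset.mem_singleton, not_or] at he
    exact C.sub_mem (hP e y he.1) (hP' e y he.2)) x (by simpa [sub_eq_zero] using hx.2.2)
  have hc : ({a, b}ᶜ : Finset (Fin (m + 1))).card = m - 1 := by
    rw [Finset.card_compl, Finset.card_pair hab, Fintype.card_fin]; omega
  rw [hc] at hw
  refine hw.trans (Finset.card_le_card ?_)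
  intro y hy
  simp only [conf, Finset.mem_filter, Finset.mem_univ, true_and] at hy ⊢
  refine ⟨?_, ?_, ?_⟩
  · rw [hy.1 a (by simp), hx.1]
  · rw [hy.1 b (by simp), hx.2.1]
  · simpa [sub_eq_zero] using hy.2

lemma edges_bound {F : Type} [Field F] [DecidableEq F] {n m : ℕ}
    (C : Submodule F (Fin n → F)) (r P P' : (Fin (m + 1) → Fin n) → F) (a b : Fin (m + 1))
    (hab : a ≠ b)
    (hP : ∀ e x, e ≠ a → (fun j => P (Function.update x e j)) ∈ C)
    (hP' : ∀ e x, e ≠ b → (fun j => P' (Function.update x e j)) ∈ C)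
    (A B : Finset (Fin n)) (τ : ℝ) (hτ : 0 ≤ τ)
    (hA : ∀ i ∈ A, ((Finset.univ.filter (fun x => x a = i ∧ P x ≠ r x)).card : ℝ)
      ≤ τ * (n : ℝ) ^ m)
    (hB : ∀ i ∈ B, ((Finset.univ.filter (fun x => x b = i ∧ P' x ≠ r x)).card : ℝ)
      ≤ τ * (n : ℝ) ^ m) :
    (∑ i ∈ A, ((B.filter (fun j => (conf P P' a b i j).Nonempty)).card : ℝ)) *
      (minDist (C : Set (Fin n → F)) : ℝ) ^ (m - 1) ≤ 2 * τ * (n : ℝ) ^ (m + 1) := by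
  have key : ∀ (p : Fin (m + 1)) (Q : (Fin (m + 1) → Fin n) → F) (S : Finset (Fin n)),
      (∀ i ∈ S, ((Finset.univ.filter (fun x => x p = i ∧ Q x ≠ r x)).card : ℝ)
      ≤ τ * (n : ℝ) ^ m) →
      ((Finset.univ.filter (fun x => x p ∈ S ∧ Q x ≠ r x)).card : ℝ) ≤ τ * (n : ℝ) ^ (m + 1) := by
    intro p Q S hS
    have : (Finset.univ.filter (fun x => x p ∈ S ∧ Q x ≠ r x)) =
        S.biUnion (fun i => Finset.univ.filter (fun x => x p = i ∧ Q x ≠ r x)) := by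
      ext x; simp
    have h1 : ((Finset.univ.filter (fun x => x p ∈ S ∧ Q x ≠ r x)).card : ℝ) ≤
        ∑ i ∈ S, ((Finset.univ.filter (fun x => x p = i ∧ Q x ≠ r x)).card : ℝ) := by
      rw [this]; exact_mod_cast Finset.card_biUnion_le
    have h2 := h1.trans (Finset.sum_le_sum hS)
    simp only [Finset.sum_const, nsmul_eq_mul] at h2
    have h3 : (S.card : ℝ) ≤ n := by
      have := Finset.card_le_univ S
      rw [Fintype.card_fin] at this
      exact_mod_cast this
    calc _ ≤ _ := h2
      _ ≤ (n : ℝ) * (τ * (n : ℝ) ^ m) := by gcongr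
      _ = _ := by ring
  have hk1 := key a P A hA
  have hk2 := key b P' B hB
  have hsum : (∑ i ∈ A, (B.filter (fun j => (conf P P' a b i j).Nonempty)).card) *
      (minDist (C : Set (Fin n → F))) ^ (m - 1) ≤
      (Finset.univ.filter (fun x => x a ∈ A ∧ P x ≠ r x)).card +
      (Finset.univ.filter (fun x => x b ∈ B ∧ P' x ≠ r x)).card := by
    calc _ ≤ ∑ p ∈ A ×ˢ B, (conf P P' a b p.1 p.2).card := by
          rw [Finset.sum_product, Finset.sum_mul]
          apply Finset.sum_le_sum
          intro i _
          calc _ = ∑ j ∈ B.filter (fun j => (conf P P' a b i j).Nonempty),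
                (minDist (C : Set (Fin n → F))) ^ (m - 1) := by simp
            _ ≤ ∑ j ∈ B.filter (fun j => (conf P P' a b i j).Nonempty),
                (conf P P' a b i j).card := by
              apply Finset.sum_le_sum
              intro j hj
              exact conf_card C P P' a b hab hP hP' i j (Finset.mem_filter.mp hj).2
            _ ≤ _ := Finset.sum_le_sum_of_subset (Finset.filter_subset _ _)
      _ = ((A ×ˢ B).biUnion (fun p => conf P P' a b p.1 p.2)).card := by
          rw [Finset.card_biUnion]
          intro p _ q _ hpq
          rw [Function.onFun, Finset.disjoint_left]
          intro x hx hx'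
          simp only [conf, Finset.mem_filter, Finset.mem_univ, true_and] at hx hx'
          exact hpq (Prod.ext (hx.1.symm.trans hx'.1) (hx.2.1.symm.trans hx'.2.1))
      _ ≤ ((Finset.univ.filter (fun x => x a ∈ A ∧ P x ≠ r x)) ∪
          (Finset.univ.filter (fun x => x b ∈ B ∧ P' x ≠ r x))).card := by
          apply Finset.card_le_card
          intro x hx
          simp only [conf, Finset.mem_biUnion, Finset.mem_product, Finset.mem_union,
            Finset.mem_filter, Finset.mem_univ, true_and] at hx ⊢
          obtain ⟨p, ⟨hp1, hp2⟩, h1, h2, h3⟩ := hx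
          by_cases hh : P x = r x
          · right
            exact ⟨h2 ▸ hp2, fun h => h3 (hh.trans h.symm)⟩
          · left
            exact ⟨h1 ▸ hp1, hh⟩
      _ ≤ _ := Finset.card_union_le _ _
  have hsum' : (∑ i ∈ A, ((B.filter (fun j => (conf P P' a b i j).Nonempty)).card : ℝ)) *
      (minDist (C : Set (Fin n → F)) : ℝ) ^ (m - 1) ≤
      ((Finset.univ.filter (fun x => x a ∈ A ∧ P x ≠ r x)).card : ℝ) +
      ((Finset.univ.filter (fun x => x b ∈ B ∧ P' x ≠ r x)).card : ℝ) := by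
    exact_mod_cast hsum
  linarith

/-- Number of removed slices in a direction. -/
lemma removed_bound {F : Type} [Field F] [DecidableEq F] {n m : ℕ} (hm : 2 ≤ m)
    (C : Submodule F (Fin n → F)) (r P P' : (Fin (m + 1) → Fin n) → F) (a b : Fin (m + 1))
    (hab : a ≠ b)
    (hP : ∀ e x, e ≠ a → (fun j => P (Function.update x e j)) ∈ C)
    (hP' : ∀ e x, e ≠ b → (fun j => P' (Function.update x e j)) ∈ C)
    (A B : Finset (Fin n)) (τ ε : ℝ) (hτ : 0 ≤ τ)
    (hA : ∀ i ∈ A, ((Finset.univ.filter (fun x => x a = i ∧ P x ≠ r x)).card : ℝ)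
      ≤ τ * (n : ℝ) ^ m)
    (hB : ∀ i ∈ B, ((Finset.univ.filter (fun x => x b = i ∧ P' x ≠ r x)).card : ℝ)
      ≤ τ * (n : ℝ) ^ m)
    (hAc : (Aᶜ.card : ℝ) ≤ 3 * ε * n)
    (hd : 0 < minDist (C : Set (Fin n → F))) :
    (((A.filter (fun i => 4 * (B.filter (fun j => (conf P P' a b i j).Nonempty)).card
      < minDist (C : Set (Fin n → F))))ᶜ.card : ℕ) : ℝ) ≤
      3 * ε * n + 8 * τ * n * ((n : ℝ) / (minDist (C : Set (Fin n → F)) : ℝ)) ^ m := by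
  have he := edges_bound C r P P' a b hab hP hP' A B τ hτ hA hB
  set d := minDist (C : Set (Fin n → F)) with hdd
  set deg : Fin n → ℕ := fun i => (B.filter (fun j => (conf P P' a b i j).Nonempty)).card
    with hdeg
  have hdR : (0 : ℝ) < d := by exact_mod_cast hd
  set H := A.filter (fun i => ¬ (4 * deg i < d)) with hH
  have h1 : (A.filter (fun i => 4 * deg i < d))ᶜ ⊆ Aᶜ ∪ H := by
    intro i hi
    simp only [Finset.mem_compl, Finset.mem_union, Finset.mem_filter, hH, not_and] at hi ⊢
    tauto
  have h2 : (((A.filter (fun i => 4 * deg i < d))ᶜ.card : ℕ) : ℝ) ≤ Aᶜ.card + H.card := by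
    exact_mod_cast (Finset.card_le_card h1).trans (Finset.card_union_le _ _)
  have h3 : (H.card : ℝ) * d ≤ 4 * ∑ i ∈ A, (deg i : ℝ) := by
    have : H.card * d ≤ 4 * ∑ i ∈ A, deg i := by
      calc _ = ∑ i ∈ H, d := by simp
        _ ≤ ∑ i ∈ H, 4 * deg i := by
          apply Finset.sum_le_sum
          intro i hi
          have := (Finset.mem_filter.mp hi).2
          omega
        _ ≤ ∑ i ∈ A, 4 * deg i := Finset.sum_le_sum_of_subset (Finset.filter_subset _ _)
        _ = _ := by rw [Finset.mul_sum]
    exact_mod_cast this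
  have h4 : (H.card : ℝ) * (d : ℝ) ^ m ≤ 8 * τ * n ^ (m + 1) := by
    obtain ⟨q, rfl⟩ : ∃ q, m = q + 1 := ⟨m - 1, by omega⟩
    simp only [Nat.add_sub_cancel] at he
    calc (H.card : ℝ) * (d : ℝ) ^ (q + 1) = (H.card * d) * (d : ℝ) ^ q := by ring
      _ ≤ (4 * ∑ i ∈ A, (deg i : ℝ)) * (d : ℝ) ^ q := by gcongr
      _ = 4 * ((∑ i ∈ A, (deg i : ℝ)) * (d : ℝ) ^ q) := by ring
      _ ≤ 4 * (2 * τ * (n : ℝ) ^ (q + 1 + 1)) := by gcongr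
      _ = _ := by ring
  have h5 : (H.card : ℝ) ≤ 8 * τ * n * ((n : ℝ) / d) ^ m := by
    rw [div_pow, ← mul_div_assoc, le_div_iff₀ (by positivity)]
    calc _ ≤ _ := h4
      _ = _ := by ring
  linarith

lemma core {F : Type} [Field F] [DecidableEq F] {n m : ℕ} (hm : 2 ≤ m) (hn : 0 < n)
    (C : Submodule F (Fin n → F)) (r : (Fin (m + 1) → Fin n) → F)
    (Q : Fin (m + 1) → (Fin (m + 1) → Fin n) → F)
    (hQ : ∀ a e x, e ≠ a → (fun j => Q a (Function.update x e j)) ∈ C)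
    (G : Fin (m + 1) → Finset (Fin n)) (τ ε : ℝ) (hτ : 0 ≤ τ) (hε : 0 ≤ ε)
    (hG : ∀ a, ∀ i ∈ G a, ((Finset.univ.filter (fun x => x a = i ∧ Q a x ≠ r x)).card : ℝ)
      ≤ τ * (n : ℝ) ^ m)
    (a b c : Fin (m + 1)) (hab : a ≠ b) (hac : a ≠ c) (hbc : b ≠ c)
    (ha : ((G a)ᶜ.card : ℝ) ≤ 3 * ε * n)
    (hb : ((G b)ᶜ.card : ℝ) ≤ 3 * ε * n)
    (hc : ((G c)ᶜ.card : ℝ) ≤ 3 * ε * n)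
    (hd : 0 < minDist (C : Set (Fin n → F)))
    (hdn : minDist (C : Set (Fin n → F)) ≤ n)
    (hcond : τ + 2 * ε ≤ (1 / 12) *
      (((minDist (C : Set (Fin n → F)) : ℝ)) / n) ^ (m + 1)) :
    ∃ R ∈ tensorPow (C : Set (Fin n → F)) (m + 1), (hammingDist r R : ℝ) ≤
      (16 * ((n : ℝ) / (minDist (C : Set (Fin n → F)) : ℝ)) ^ m * (τ + ε)) * n ^ (m + 1) := by
  have hra := removed_bound hm C r (Q a) (Q c) a c hac (hQ a) (hQ c) (G a) (G c) τ ε hτ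
    (hG a) (hG c) ha hd
  have hrb := removed_bound hm C r (Q b) (Q c) b c hbc (hQ b) (hQ c) (G b) (G c) τ ε hτ
    (hG b) (hG c) hb hd
  set d := minDist (C : Set (Fin n → F)) with hdd
  have hdR : (0 : ℝ) < d := by exact_mod_cast hd
  have hnR : (0 : ℝ) < n := by exact_mod_cast hn
  have hdnR : (d : ℝ) ≤ n := by exact_mod_cast hdn
  set Sa := (G a).filter (fun i => 4 * ((G c).filter
    (fun j => (conf (Q a) (Q c) a c i j).Nonempty)).card < d) with hSa
  set Sb := (G b).filter (fun i => 4 * ((G c).filter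
    (fun j => (conf (Q b) (Q c) b c i j).Nonempty)).card < d) with hSb
  set K := ((n : ℝ) / d) ^ m with hK
  have hK1 : 1 ≤ K := one_le_pow₀ (by rw [le_div_iff₀ hdR]; linarith)
  have hKd : K * n * ((d : ℝ) / n) ^ (m + 1) = d := by
    rw [hK, div_pow, div_pow]; field_simp; ring
  have hsmall : 12 * (K * n * (τ + 2 * ε)) ≤ d := by
    have := mul_le_mul_of_nonneg_left hcond (show 0 ≤ K * n by positivity)
    calc _ ≤ 12 * (K * n * (1 / 12 * ((d : ℝ) / n) ^ (m + 1))) := by linarith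
      _ = K * n * ((d : ℝ) / n) ^ (m + 1) := by ring
      _ = d := hKd
  have hεK : ε * n ≤ K * n * ε := by nlinarith [mul_nonneg hε hnR.le]
  have hτK0 : 0 ≤ K * n * τ := by positivity
  have hεK0 : 0 ≤ K * n * ε := by positivity
  have hεn0 : 0 ≤ ε * n := by positivity
  have hSa' : Saᶜ.card < d := by
    have : (Saᶜ.card : ℝ) < d := by nlinarith
    exact_mod_cast this
  have hSb' : Sbᶜ.card < d := by
    have : (Sbᶜ.card : ℝ) < d := by nlinarith
    exact_mod_cast this
  have hcons : ∀ x, x a ∈ Sa → x b ∈ Sb → Q a x = Q b x := by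
    intro x hxa hxb
    by_contra hne
    have hw := line_weight C ((fun k => Q a (Function.update x c k)) -
      (fun k => Q b (Function.update x c k)))
      (C.sub_mem (hQ a c x (Ne.symm hac)) (hQ b c x (Ne.symm hbc))) (by
        intro h
        have := congrFun h (x c)
        simp [sub_eq_zero] at this
        exact hne this)
    have hsub : (Finset.univ.filter (fun k => ((fun k => Q a (Function.update x c k)) -
      (fun k => Q b (Function.update x c k))) k ≠ 0)) ⊆
      (G c)ᶜ ∪ ((G c).filter (fun j => (conf (Q a) (Q c) a c (x a) j).Nonempty) ∪
        (G c).filter (fun j => (conf (Q b) (Q c) b c (x b) j).Nonempty)) := by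
      intro k hk
      simp only [Finset.mem_filter, Finset.mem_univ, true_and, Pi.sub_apply, ne_eq,
        sub_eq_zero] at hk
      simp only [Finset.mem_union, Finset.mem_compl, Finset.mem_filter]
      by_cases hkc : k ∈ G c
      · right
        by_cases hq : Q a (Function.update x c k) = Q c (Function.update x c k)
        · right
          refine ⟨hkc, Function.update x c k, ?_⟩
          simp only [conf, Finset.mem_filter, Finset.mem_univ, true_and]
          refine ⟨Function.update_of_ne hbc _ _, Function.update_self _ _ _, ?_⟩
          exact fun h => hk (hq.trans h.symm)
        · left
          refine ⟨hkc, Function.update x c k, ?_⟩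
          simp only [conf, Finset.mem_filter, Finset.mem_univ, true_and]
          exact ⟨Function.update_of_ne hac _ _, Function.update_self _ _ _, hq⟩
      · left; exact hkc
    have hle := hw.trans ((Finset.card_le_card hsub).trans ((Finset.card_union_le _ _).trans
      (Nat.add_le_add_left (Finset.card_union_le _ _) _)))
    have hxa2 := (Finset.mem_filter.mp hxa).2
    have hxb2 := (Finset.mem_filter.mp hxb).2
    have hc2 : 2 * (G c)ᶜ.card < d := by
      have : 2 * ((G c)ᶜ.card : ℝ) < d := by nlinarith
      exact_mod_cast this
    omega
  obtain ⟨R, hR, hRP⟩ := glue C (Q a) (Q b) a b hab (hQ a) (hQ b) Sa Sb hSa' hSb' hcons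
  refine ⟨R, hR, ?_⟩
  have hcover : (Finset.univ.filter (fun x => r x ≠ R x)) ⊆
      (Saᶜ.biUnion (fun i => Finset.univ.filter (fun x => x a = i))) ∪
      (Sa.biUnion (fun i => Finset.univ.filter (fun x => x a = i ∧ Q a x ≠ r x))) := by
    intro x hx
    simp only [Finset.mem_filter, Finset.mem_univ, true_and] at hx
    simp only [Finset.mem_union, Finset.mem_biUnion, Finset.mem_filter, Finset.mem_univ, true_and,
      Finset.mem_compl]
    by_cases h : x a ∈ Sa
    · right
      refine ⟨_, h, rfl, ?_⟩
      rw [← hRP x h]; exact Ne.symm hx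
    · left; exact ⟨_, h, rfl⟩
  have hslice : ∀ i : Fin n,
      (Finset.univ.filter (fun x : Fin (m + 1) → Fin n => x a = i)).card = n ^ m := by
    intro i
    have : (Finset.univ.filter (fun x : Fin (m + 1) → Fin n => x a = i)) =
        Finset.univ.map ⟨fun y : Fin m → Fin n => a.insertNth (α := fun _ => Fin n) i y,
          Fin.insertNth_right_injective (α := fun _ => Fin n) i⟩ := by
      ext x
      simp only [Finset.mem_filter, Finset.mem_univ, true_and, Finset.mem_map,
        Function.Embedding.coeFn_mk]
      constructor
      · intro h
        exact ⟨a.removeNth x, by rw [← h]; exact Fin.insertNth_self_removeNth a x⟩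
      · rintro ⟨y, rfl⟩
        exact Fin.insertNth_apply_same _ _ _
    rw [this]; simp
  have hcnt : (hammingDist r R : ℝ) ≤ Saᶜ.card * (n : ℝ) ^ m + ∑ i ∈ Sa,
      ((Finset.univ.filter (fun x => x a = i ∧ Q a x ≠ r x)).card : ℝ) := by
    have h1 := (Finset.card_le_card hcover).trans ((Finset.card_union_le _ _).trans
      (Nat.add_le_add Finset.card_biUnion_le Finset.card_biUnion_le))
    simp only [hslice, Finset.sum_const, smul_eq_mul] at h1
    have h2 : hammingDist r R ≤ Saᶜ.card * n ^ m + ∑ i ∈ Sa,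
      (Finset.univ.filter (fun x => x a = i ∧ Q a x ≠ r x)).card := h1
    exact_mod_cast h2
  have hs2 : ∑ i ∈ Sa, ((Finset.univ.filter (fun x => x a = i ∧ Q a x ≠ r x)).card : ℝ)
      ≤ n * (τ * (n : ℝ) ^ m) := by
    have h1 : ∑ i ∈ Sa, ((Finset.univ.filter (fun x => x a = i ∧ Q a x ≠ r x)).card : ℝ)
      ≤ ∑ i ∈ Sa, τ * (n : ℝ) ^ m :=
      Finset.sum_le_sum (fun i hi => hG a i (Finset.mem_filter.mp hi).1)
    simp only [Finset.sum_const, nsmul_eq_mul] at h1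
    have h3 : (Sa.card : ℝ) ≤ n := by
      have := Finset.card_le_univ Sa
      rw [Fintype.card_fin] at this
      exact_mod_cast this
    exact h1.trans (by gcongr)
  have hτK : τ * n ≤ K * n * τ := by nlinarith [mul_nonneg hτ hnR.le]
  have hfin : (Saᶜ.card : ℝ) + n * τ ≤ 16 * (K * n * (τ + ε)) := by nlinarith
  calc (hammingDist r R : ℝ) ≤ Saᶜ.card * (n : ℝ) ^ m + n * (τ * (n : ℝ) ^ m) := by linarith
    _ = (Saᶜ.card + n * τ) * (n : ℝ) ^ m := by ring
    _ ≤ (16 * (K * n * (τ + ε))) * (n : ℝ) ^ m := by gcongr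
    _ = _ := by ring

lemma distToCode_le_of {ι F : Type} [Fintype ι] [DecidableEq F] (D : Set (ι → F))
    (r R : ι → F) (hR : R ∈ D) : distToCode D r ≤ relHammingDist r R := by
  apply csInf_le
  · refine ⟨0, ?_⟩
    rintro _ ⟨y, _, rfl⟩
    unfold relHammingDist
    positivity
  · exact ⟨R, hR, rfl⟩

lemma exists_closest {ι F : Type} [Fintype ι] [Fintype F] [DecidableEq F] (D : Set (ι → F))
    (hD : D.Nonempty) (r : ι → F) : ∃ c ∈ D, relHammingDist r c = distToCode D r := by
  classical
  have hfin : (relHammingDist r '' D).Finite := (Set.toFinite D).image _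
  obtain ⟨c, hc, h⟩ := (hD.image (relHammingDist r)).csInf_mem hfin
  exact ⟨c, hc, h⟩

lemma removeNth_update_ne {α : Type} {m : ℕ} (b e : Fin (m + 1)) (he : e ≠ b)
    (x : Fin (m + 1) → α) :
    ∃ e' : Fin m, ∀ j, b.removeNth (Function.update x e j) =
      Function.update (b.removeNth x) e' j := by
  obtain ⟨e', rfl⟩ := Fin.exists_succAbove_eq he
  refine ⟨e', fun j => ?_⟩
  funext t
  by_cases ht : t = e'
  · subst ht; simp [Fin.removeNth]
  · simp [Fin.removeNth, Function.update_of_ne ht,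
      Function.update_of_ne (fun h => ht (Fin.succAbove_right_injective h))]

lemma three_dirs {m : ℕ} (hm : 2 ≤ m) (f : Fin (m + 1) → ℝ) (hf : ∀ b, 0 ≤ f b) (t : ℝ)
    (h : ∑ b, f b ≤ (m + 1) * t) :
    ∃ a b c, a ≠ b ∧ a ≠ c ∧ b ≠ c ∧ f a ≤ 3 * t ∧ f b ≤ 3 * t ∧ f c ≤ 3 * t := by
  classical
  set D := Finset.univ.filter (fun b => f b ≤ 3 * t) with hD
  have hcard : 2 < D.card := by
    have hc := Finset.card_add_card_compl D
    rw [Fintype.card_fin] at hc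
    rcases Finset.eq_empty_or_nonempty Dᶜ with h0 | h0
    · rw [h0, Finset.card_empty] at hc; omega
    · have h1 : ∑ b ∈ Dᶜ, 3 * t < ∑ b ∈ Dᶜ, f b := by
        apply Finset.sum_lt_sum_of_nonempty h0
        intro b hb
        simpa [hD] using hb
      have h2 : ∑ b ∈ Dᶜ, f b ≤ ∑ b, f b :=
        Finset.sum_le_sum_of_subset_of_nonneg (Finset.subset_univ _) (fun b _ _ => hf b)
      simp only [Finset.sum_const, nsmul_eq_mul] at h1
      have ht : 0 ≤ t := by
        by_contra hneg
        have h3 : 0 ≤ ∑ b, f b := Finset.sum_nonneg (fun b _ => hf b)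
        have : ((m : ℝ) + 1) * t < 0 := mul_neg_of_pos_of_neg (by positivity) (by linarith)
        linarith
      have h4 : (Dᶜ.card : ℝ) * 3 < m + 1 := by
        by_contra hge
        have := mul_le_mul_of_nonneg_right (not_lt.mp hge) ht
        linarith
      have h5 : Dᶜ.card * 3 < m + 1 := by exact_mod_cast h4
      omega
  obtain ⟨a, b, c, ha, hb, hc, h1, h2, h3⟩ := Finset.two_lt_card_iff.mp hcard
  simp only [hD, Finset.mem_filter, Finset.mem_univ, true_and] at ha hb hc
  exact ⟨a, b, c, h1, h2, h3, ha, hb, hc⟩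

end CrudeAux

open scoped Classical in
/-- Crude soundness of the product tester (Raz–Safra style). Let `C` be
an `[n,k,d]` code and the ambient dimension `m+1 ≥ 3`. Suppose `r ∈ F^{[n]^{m+1}}` has
`τ`-soundness-error `ε`: the fraction of pairs `(b,i)` with `δ_{C^m}(r_{b,i}) > τ` is at
most `ε`, where `τ + 2ε ≤ (1/12)·((d−1)/n)^{m+1}`. Then
`δ_{C^{m+1}}(r) ≤ 16·(n/d)^m·(τ + ε)`. -/
theorem crude_soundness
    {F : Type} [Field F] [Fintype F] [DecidableEq F] {n k d m : ℕ} (hm : 2 ≤ m)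
    (C : Submodule F (Fin n → F))
    (hk : Module.finrank F C = k)
    (hd : minDist (C : Set (Fin n → F)) = d)
    (r : (Fin (m + 1) → Fin n) → F) (τ ε : ℝ) (hτ : 0 ≤ τ) (hε : 0 ≤ ε)
    (hsound : ((Finset.univ.filter (fun p : Fin (m + 1) × Fin n =>
        τ < distToCode (tensorPow (C : Set (Fin n → F)) m) (sliceAt r p.1 p.2))).card : ℝ)
        ≤ ε * ((m + 1) * n))
    (hcond : τ + 2 * ε ≤ (1 / 12) * (((d : ℝ) - 1) / n) ^ (m + 1)) :
    distToCode (tensorPow (C : Set (Fin n → F)) (m + 1)) r ≤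
      16 * ((n : ℝ) / d) ^ m * (τ + ε) := by
  classical
  have hz : ∀ q, (0 : (Fin q → Fin n) → F) ∈ tensorPow (C : Set (Fin n → F)) q :=
    fun q b x => C.zero_mem
  subst hd
  have hRHS : 0 ≤ 16 * ((n : ℝ) / (minDist (C : Set (Fin n → F)) : ℝ)) ^ m * (τ + ε) := by
    positivity
  rcases Nat.eq_zero_or_pos n with hn | hn
  · refine (CrudeAux.distToCode_le_of _ r 0 (hz _)).trans (le_trans ?_ hRHS)
    subst hn
    simp [relHammingDist]
  have hnR : (0 : ℝ) < n := by exact_mod_cast hn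
  have hcl := fun (b : Fin (m + 1)) (i : Fin n) =>
    CrudeAux.exists_closest (tensorPow (C : Set (Fin n → F)) m) ⟨0, hz m⟩ (sliceAt r b i)
  choose cc hcc hcd using hcl
  let Q : Fin (m + 1) → (Fin (m + 1) → Fin n) → F := fun b x => cc b (x b) (b.removeNth x)
  have hQ : ∀ a e x, e ≠ a → (fun j => Q a (Function.update x e j)) ∈ C := by
    intro a e x he
    obtain ⟨e', he'⟩ := CrudeAux.removeNth_update_ne a e he x
    simp only [Q, he', Function.update_of_ne (Ne.symm he)]
    exact hcc a (x a) e' _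
  let G : Fin (m + 1) → Finset (Fin n) := fun b => Finset.univ.filter (fun i =>
    ¬ τ < distToCode (tensorPow (C : Set (Fin n → F)) m) (sliceAt r b i))
  have hG : ∀ a, ∀ i ∈ G a,
      ((Finset.univ.filter (fun x => x a = i ∧ Q a x ≠ r x)).card : ℝ) ≤ τ * (n : ℝ) ^ m := by
    intro a i hi
    have h1 := not_lt.mp (Finset.mem_filter.mp hi).2
    rw [← hcd a i, relHammingDist, div_le_iff₀ (by simp; positivity)] at h1
    simp only [Fintype.card_pi, Fintype.card_fin, Finset.prod_const, Finset.card_univ,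
      Nat.cast_pow] at h1
    refine le_trans ?_ h1
    have : (Finset.univ.filter (fun x => x a = i ∧ Q a x ≠ r x)).card ≤
        hammingDist (sliceAt r a i) (cc a i) := by
      unfold hammingDist
      refine Finset.card_le_card_of_injOn (fun x => a.removeNth x) ?_ ?_
      · intro x hx
        simp only [Finset.coe_filter, Finset.mem_univ, true_and, Set.mem_ofPred_eq] at hx ⊢
        obtain ⟨rfl, h2⟩ := hx
        simp only [sliceAt]
        rw [Fin.insertNth_self_removeNth]
        exact Ne.symm h2
      · intro x hx y hy hxy
        simp only [Finset.coe_filter, Finset.mem_univ, true_and, Set.mem_ofPred_eq] at hx hy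
        rw [← Fin.insertNth_self_removeNth a x, ← Fin.insertNth_self_removeNth a y,
          hx.1, hy.1]
        simp only at hxy
        rw [hxy]
    exact_mod_cast this
  have hsum : ∑ b, ((G b)ᶜ.card : ℝ) ≤ (m + 1) * (ε * n) := by
    refine le_trans (le_of_eq ?_) (hsound.trans (le_of_eq (by ring)))
    rw [Finset.card_filter, ← Finset.univ_product_univ, Finset.sum_product]
    push_cast
    apply Finset.sum_congr rfl
    intro b _
    have : (G b)ᶜ = Finset.univ.filter (fun i =>
        τ < distToCode (tensorPow (C : Set (Fin n → F)) m) (sliceAt r b i)) := by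
      ext i; simp [G]
    rw [this, Finset.card_filter]
    push_cast
    rfl
  obtain ⟨a, b, c, hab, hac, hbc, ha, hb, hc⟩ :=
    CrudeAux.three_dirs hm (fun b => ((G b)ᶜ.card : ℝ)) (fun b => by positivity) (ε * n) hsum
  simp only [← mul_assoc] at ha hb hc
  rcases Nat.eq_zero_or_pos (minDist (C : Set (Fin n → F))) with hd | hd
  · -- trivial code
    have hC : ∀ w ∈ C, w = 0 := by
      intro w hw
      by_contra h0
      have hne : {e | ∃ x ∈ (C : Set (Fin n → F)), ∃ y ∈ (C : Set (Fin n → F)),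
          x ≠ y ∧ hammingDist x y = e}.Nonempty := ⟨_, w, hw, 0, C.zero_mem, h0, rfl⟩
      obtain ⟨x, _, y, _, hxy, he⟩ := Nat.sInf_mem hne
      have : hammingDist x y = 0 := he.trans hd
      exact hxy (hammingDist_eq_zero.mp this)
    have hpow : τ + 2 * ε ≤ (1 / 12) * (1 / (n : ℝ)) ^ (m + 1) := by
      refine hcond.trans ?_
      have h1 := le_abs_self ((((minDist (C : Set (Fin n → F)) : ℕ) : ℝ) - 1) / n) 
      have h2 := le_abs_self (((((minDist (C : Set (Fin n → F)) : ℕ) : ℝ) - 1) / n) ^ (m + 1))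
      rw [abs_pow, hd, Nat.cast_zero, zero_sub, abs_div, abs_neg, abs_one,
        abs_of_pos hnR] at h2
      rw [hd, Nat.cast_zero, zero_sub]
      linarith
    have hn1 : (1 : ℝ) ≤ n := by exact_mod_cast hn
    have hnm : (1 : ℝ) ≤ (n : ℝ) ^ m := one_le_pow₀ hn1
    have hpow2 : 12 * ((τ + 2 * ε) * ((n : ℝ) * n ^ m)) ≤ 1 := by
      have h1 := mul_le_mul_of_nonneg_right hpow (show 0 ≤ (n : ℝ) ^ (m + 1) by positivity)
      rw [mul_assoc, ← mul_pow, one_div_mul_cancel hnR.ne', one_pow] at h1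
      rw [pow_succ'] at h1
      linarith
    have hτ1 : τ * (n : ℝ) ^ m < 1 := by
      have h1 : τ * (n : ℝ) ^ m ≤ (τ + 2 * ε) * ((n : ℝ) * n ^ m) := by
        have : (n : ℝ) ^ m ≤ n * n ^ m := by nlinarith
        gcongr
        linarith
      linarith
    have hε1 : 3 * ε * n < 1 := by
      have h1 : 2 * ε * n ≤ (τ + 2 * ε) * ((n : ℝ) * n ^ m) := by
        calc 2 * ε * n ≤ (τ + 2 * ε) * (n * 1) := by nlinarith
          _ ≤ _ := by gcongr
      linarith
    have hGa : (G a)ᶜ = ∅ := by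
      rw [← Finset.card_eq_zero]
      have : ((G a)ᶜ.card : ℝ) < 1 := by linarith
      have h2 : (G a)ᶜ.card < 1 := by exact_mod_cast this
      omega
    have hr : r = 0 := by
      funext x
      have hx : x a ∈ G a := by
        by_contra h
        have := Finset.mem_compl.mpr h
        rw [hGa] at this
        simp at this
      have h1 := (hG a _ hx).trans_lt hτ1
      have h2 : (Finset.univ.filter (fun y => y a = x a ∧ Q a y ≠ r y)).card = 0 := by
        have : (Finset.univ.filter (fun y => y a = x a ∧ Q a y ≠ r y)).card < 1 := by
          exact_mod_cast h1
        omega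
      rw [Finset.card_eq_zero, Finset.filter_eq_empty_iff] at h2
      have h3 := h2 (Finset.mem_univ x)
      simp only [true_and, not_not, ne_eq] at h3
      have h4 := congrFun (hC _ (hQ a b x (Ne.symm hab))) (x b)
      simp only [Function.update_eq_self, Pi.zero_apply] at h4
      rw [← h3, h4]; rfl
    refine (CrudeAux.distToCode_le_of _ r 0 (hz _)).trans (le_trans ?_ hRHS)
    rw [hr]
    simp [relHammingDist]
  · have hdn : minDist (C : Set (Fin n → F)) ≤ n := by
      have hne := Nat.nonempty_of_pos_sInf hd
      obtain ⟨e, x, hx, y, hy, hxy, he⟩ := hne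
      have h1 : minDist (C : Set (Fin n → F)) ≤ hammingDist x y :=
        Nat.sInf_le ⟨x, hx, y, hy, hxy, rfl⟩
      have h2 := hammingDist_le_card_fintype (x := x) (y := y)
      rw [Fintype.card_fin] at h2
      exact h1.trans h2
    have hd1 : (1 : ℝ) ≤ (minDist (C : Set (Fin n → F)) : ℝ) := by exact_mod_cast hd
    have hcond' : τ + 2 * ε ≤ (1 / 12) *
        (((minDist (C : Set (Fin n → F)) : ℝ)) / n) ^ (m + 1) := by
      refine hcond.trans ?_
      have : 0 ≤ ((minDist (C : Set (Fin n → F)) : ℝ) - 1) / n :=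
        div_nonneg (by linarith) hnR.le
      gcongr
      linarith
    obtain ⟨R, hR, hRd⟩ := CrudeAux.core hm hn C r Q hQ G τ ε hτ hε hG a b c hab hac hbc
      ha hb hc hd hdn hcond'
    refine (CrudeAux.distToCode_le_of _ r R hR).trans ?_
    rw [relHammingDist, div_le_iff₀ (by simp; positivity)]
    simpa using hRd
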